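/- Optimal recovery error for the Cauchy problem for the heat equation at a single space-time point: In the setting of recovering the solution x = A₁ f + A₂ g of the heat equation ∂x/∂t − Δx = f on D = ℝ^d × (0,∞) with x(·,0) = g, on the classes W₁ = H̃^{ω_1}(M₁), W₂ = H̃^{ω_2}(M₂) (M₁ ⊂ D, M₂ ⊂ ℝ^d compact) with evaluation information at finite point sets Q₁, Q₂ known with errors e₁, e₂: if the output is measured at the single point N = {(u₀, t₀)} (u₀ ∈ ℝ^d, t₀ > 0), then the error of optimal recovery equals ∫_0^{t₀} ∫_{ℝ^d} (4π(t₀−s))^{−d/2} exp(−|u₀−v|²/(4(t₀−s))) τ̃₁(v,s) dv ds + ∫_{ℝ^d} (4πt₀)^{−d/2} exp(−|u₀−v|²/(4t₀)) τ̃₂(v) dv, where τ̃_i := τ̃_{ω_i,Q_i,e_i}. -/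

import Mathlib

/-!
The value of the solution at `(u₀, t₀)` is a linear functional of `(f, g)`, given by integration
against a nonnegative integrable kernel; so this is optimal recovery of a positive functional.

* Two functions of the class that are compatible with the same data `z` differ by at most `2 τ̃`
  pointwise (`abs_sub_le_two_tauTildeOR`): compare both with `z j` at `q j`, and with `0` at a
  nearest point of the frontier. By positivity the values of the functional compatible with `z`
  form a set of diameter at most `2 R`, where `R` is the functional at `(τ̃₁, τ̃₂)`, and such a set
  of reals lies within `R` of its centre. This gives a method with error at most `R`.
* `τ̃` and `-τ̃` both belong to the class and are compatible with the zero data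
  (`tauTildeOR_mem`, `tauTildeOR_le`); no value `Φ 0` can be closer than `R` to both `R` and `-R`.

`iInf_iSup_error_eq` packages this argument. The analytic input is that the heat kernel has total
mass one, so that it is integrable over `(0, t₀] × ℝ^d`; by Fubini and Tonelli the iterated
Bochner integrals and the iterated Lebesgue integrals are then integrals over the product.
-/

open MeasureTheory intervalIntegral
open scoped ENNReal

/-- `τ_{ω,Q,e}` on the ambient space: `min_j (e_j + ω(ρ(t,q_j)))` on `M'`, `0` off `M'`. -/
noncomputable def tauOR {M : Type*} [MetricSpace M] (ω : ℝ → ℝ) (M' : Set M) {n : ℕ}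
    (q : Fin n → M) (e : Fin n → ℝ) (t : M) : ℝ :=
  haveI := Classical.dec (t ∈ M')
  if t ∈ M' then ⨅ j, (e j + ω (dist t (q j))) else 0

/-- The truncated function `τ̃_{ω,Q,e}(t) = min { τ_{ω,Q,e}(t), ω(ρ(t,∂M')) }` on `M'`,
and `0` off `M'`. -/
noncomputable def tauTildeOR {M : Type*} [MetricSpace M] (ω : ℝ → ℝ) (M' : Set M) {n : ℕ}
    (q : Fin n → M) (e : Fin n → ℝ) (t : M) : ℝ :=
  haveI := Classical.dec (t ∈ M')
  if t ∈ M' then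
    min (⨅ j, (e j + ω (dist t (q j)))) (ω (Metric.infDist t (frontier M'))) else 0

/-- The class `H̃^ω(M')`: continuous functions vanishing outside `M'` whose restriction to
`M'` admits `ω` as a majorant of its modulus of continuity. -/
def HtildeOR {M : Type*} [MetricSpace M] (ω : ℝ → ℝ) (M' : Set M) : Set (M → ℝ) :=
  {x | Continuous x ∧ (∀ t ∉ M', x t = 0) ∧
    ∀ t ∈ M', ∀ t' ∈ M', |x t - x t'| ≤ ω (dist t t')}

/-! ### Optimal recovery of a functional with symmetric extremal elements -/

/-- A set of reals of diameter at most `2 R` lies within `R` of some point. -/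
lemma exists_center (S : Set ℝ) (R : ℝ) (h : ∀ x ∈ S, ∀ y ∈ S, x - y ≤ 2 * R) :
    ∃ c, ∀ x ∈ S, |x - c| ≤ R := by
  rcases S.eq_empty_or_nonempty with rfl | ⟨x₀, hx₀⟩
  · exact ⟨0, by simp⟩
  refine ⟨sSup S - R, fun x hx => ?_⟩
  have hb : BddAbove S := ⟨x₀ + 2 * R, fun y hy => by linarith [h y hy x₀ hx₀]⟩
  have h1 := le_csSup hb hx
  have h2 : sSup S ≤ x + 2 * R := csSup_le ⟨x₀, hx₀⟩ fun y hy => by linarith [h y hy x hx]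
  rw [abs_le]
  constructor <;> linarith

/-- If the values of `L` compatible with any data `z` have diameter at most `2 R`, and both `R`
and `-R` are compatible with one and the same data, then the error of optimal recovery of `L`
is `R`. -/
lemma iInf_iSup_error_eq {F G Z : Type*} (W₁ : Set F) (W₂ : Set G) (L : F → G → ℝ)
    (P : F → G → Z → Prop) (R : ℝ)
    (hdiam : ∀ z, ∀ f ∈ W₁, ∀ g ∈ W₂, P f g z → ∀ f' ∈ W₁, ∀ g' ∈ W₂, P f' g' z →
      L f g - L f' g' ≤ 2 * R)
    (z₀ : Z) (f₀ f₁ : F) (hf₀ : f₀ ∈ W₁) (hf₁ : f₁ ∈ W₁) (g₀ g₁ : G) (hg₀ : g₀ ∈ W₂)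
    (hg₁ : g₁ ∈ W₂) (hP₀ : P f₀ g₀ z₀) (hP₁ : P f₁ g₁ z₀) (hL₀ : L f₀ g₀ = R)
    (hL₁ : L f₁ g₁ = -R) :
    (⨅ Φ : Z → ℝ, ⨆ f ∈ W₁, ⨆ g ∈ W₂, ⨆ z : Z, ⨆ (_ : P f g z),
      ENNReal.ofReal |L f g - Φ z|) = ENNReal.ofReal R := by
  apply le_antisymm
  · have hc : ∀ z : Z, ∃ c : ℝ, ∀ x ∈ {x | ∃ f ∈ W₁, ∃ g ∈ W₂, P f g z ∧ L f g = x},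
        |x - c| ≤ R := by
      intro z
      apply exists_center
      rintro x ⟨f, hf, g, hg, hp, rfl⟩ y ⟨f', hf', g', hg', hp', rfl⟩
      exact hdiam z f hf g hg hp f' hf' g' hg' hp'
    choose Φ hΦ using hc
    refine iInf_le_of_le Φ ?_
    simp only [iSup_le_iff]
    intro f hf g hg z hp
    exact ENNReal.ofReal_le_ofReal (hΦ z _ ⟨f, hf, g, hg, hp, rfl⟩)
  · refine le_iInf fun Φ => ?_
    have key : ∀ f ∈ W₁, ∀ g ∈ W₂, P f g z₀ → R ≤ |L f g - Φ z₀| →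
        ENNReal.ofReal R ≤ ⨆ f ∈ W₁, ⨆ g ∈ W₂, ⨆ z : Z, ⨆ (_ : P f g z),
          ENNReal.ofReal |L f g - Φ z| := by
      intro f hf g hg hp hR
      exact le_iSup₂_of_le f hf <| le_iSup₂_of_le g hg <| le_iSup₂_of_le z₀ hp <|
        ENNReal.ofReal_le_ofReal hR
    rcases le_total (Φ z₀) 0 with h | h
    · refine key f₀ hf₀ g₀ hg₀ hP₀ ?_
      rw [hL₀]
      exact le_trans (by linarith) (le_abs_self _)
    · refine key f₁ hf₁ g₁ hg₁ hP₁ ?_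
      rw [hL₁]
      exact le_trans (by linarith) (neg_le_abs _)

/-! ### Moduli of continuity and the extremal function -/

/-- A modulus of continuity is its own modulus of continuity. -/
lemma abs_modulus_sub_le {ω : ℝ → ℝ} (hmono : MonotoneOn ω (Set.Ici 0))
    (hsub : ∀ s t : ℝ, 0 ≤ s → 0 ≤ t → ω (s + t) ≤ ω s + ω t) {a b c : ℝ} (ha : 0 ≤ a)
    (hb : 0 ≤ b) (h : |a - b| ≤ c) : |ω a - ω b| ≤ ω c := by
  have hc : 0 ≤ c := (abs_nonneg _).trans h
  have aux : ∀ x y : ℝ, 0 ≤ x → 0 ≤ y → x ≤ y + c → ω x ≤ ω y + ω c := fun x y hx hy hxy =>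
    (hmono (Set.mem_Ici.2 hx) (Set.mem_Ici.2 (by linarith)) hxy).trans (hsub y c hy hc)
  rw [abs_le] at h ⊢
  constructor
  · linarith [aux b a hb ha (by linarith)]
  · linarith [aux a b ha hb (by linarith)]

lemma abs_iInf_sub_iInf_le {n : ℕ} [Nonempty (Fin n)] {a b : Fin n → ℝ} {c : ℝ}
    (h : ∀ j, |a j - b j| ≤ c) : |(⨅ j, a j) - ⨅ j, b j| ≤ c := by
  have aux : ∀ a b : Fin n → ℝ, (∀ j, |a j - b j| ≤ c) → (⨅ j, a j) ≤ (⨅ j, b j) + c := by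
    intro a b h
    rw [← sub_le_iff_le_add]
    refine le_ciInf fun j => ?_
    have h1 := ciInf_le (Set.finite_range a).bddBelow j
    linarith [(abs_le.1 (h j)).2]
  rw [abs_le]
  constructor
  · linarith [aux b a fun j => by rw [abs_sub_comm]; exact h j]
  · linarith [aux a b h]

section Extremal

variable {M : Type*} [MetricSpace M] {ω : ℝ → ℝ} {M' : Set M} {n : ℕ} {q : Fin n → M}
  {e : Fin n → ℝ}

lemma tauTildeOR_of_mem {t : M} (ht : t ∈ M') : tauTildeOR ω M' q e t =
    min (⨅ j, (e j + ω (dist t (q j)))) (ω (Metric.infDist t (frontier M'))) := by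
  simp [tauTildeOR, ht]

lemma tauTildeOR_of_notMem {t : M} (ht : t ∉ M') : tauTildeOR ω M' q e t = 0 := by
  simp [tauTildeOR, ht]

lemma tauTildeOR_nonneg (hnn : ∀ s : ℝ, 0 ≤ s → 0 ≤ ω s) (he : ∀ j, 0 ≤ e j) (t : M) :
    0 ≤ tauTildeOR ω M' q e t := by
  by_cases ht : t ∈ M'
  · rw [tauTildeOR_of_mem ht]
    exact le_min (Real.iInf_nonneg fun j => add_nonneg (he j) (hnn _ dist_nonneg))
      (hnn _ Metric.infDist_nonneg)
  · rw [tauTildeOR_of_notMem ht]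

lemma tauTildeOR_le (h0 : ω 0 = 0) (hq : ∀ j, q j ∈ M') (j : Fin n) :
    tauTildeOR ω M' q e (q j) ≤ e j := by
  rw [tauTildeOR_of_mem (hq j)]
  refine (min_le_left _ _).trans ((ciInf_le (Set.finite_range _).bddBelow j).trans ?_)
  simp [h0]

/-- On `M'` the function `τ̃` is an infimum of functions with modulus of continuity `ω`, and it
vanishes on the frontier, so that the extension by zero is continuous. -/
lemma tauTildeOR_mem (hn : 0 < n) (h0 : ω 0 = 0) (hcont : ContinuousOn ω (Set.Ici 0))
    (hmono : MonotoneOn ω (Set.Ici 0))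
    (hsub : ∀ s t : ℝ, 0 ≤ s → 0 ≤ t → ω (s + t) ≤ ω s + ω t)
    (hnn : ∀ s : ℝ, 0 ≤ s → 0 ≤ ω s) (he : ∀ j, 0 ≤ e j) :
    tauTildeOR ω M' q e ∈ HtildeOR ω M' := by
  have : Nonempty (Fin n) := ⟨⟨0, hn⟩⟩
  have hmod : ∀ t t' : M,
      |min (⨅ j, (e j + ω (dist t (q j)))) (ω (Metric.infDist t (frontier M'))) -
        min (⨅ j, (e j + ω (dist t' (q j)))) (ω (Metric.infDist t' (frontier M')))| ≤
        ω (dist t t') := by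
    intro t t'
    refine (abs_min_sub_min_le_max _ _ _ _).trans (max_le ?_ ?_)
    · refine abs_iInf_sub_iInf_le fun j => ?_
      rw [add_sub_add_left_eq_sub]
      exact abs_modulus_sub_le hmono hsub dist_nonneg dist_nonneg (abs_dist_sub_le _ _ _)
    · refine abs_modulus_sub_le hmono hsub Metric.infDist_nonneg Metric.infDist_nonneg ?_
      have h1 := Metric.infDist_le_infDist_add_dist (s := frontier M') (x := t) (y := t')
      have h2 := Metric.infDist_le_infDist_add_dist (s := frontier M') (x := t') (y := t)
      rw [dist_comm] at h2
      rw [abs_le]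
      constructor <;> linarith
  refine ⟨?_, fun t ht => tauTildeOR_of_notMem ht, fun t ht t' ht' => ?_⟩
  · have hc : Continuous fun t : M =>
        min (⨅ j, (e j + ω (dist t (q j)))) (ω (Metric.infDist t (frontier M'))) := by
      rw [continuous_iff_continuousAt]
      intro t
      rw [ContinuousAt, tendsto_iff_dist_tendsto_zero]
      have hlim : Filter.Tendsto (fun t' : M => ω (dist t' t)) (nhds t) (nhds 0) := by
        have hcomp : Continuous fun t' : M => ω (dist t' t) :=
          hcont.comp_continuous (by fun_prop) fun t' => dist_nonneg
        simpa [h0] using hcomp.tendsto t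
      exact squeeze_zero (fun _ => dist_nonneg) (fun t' => by
        rw [Real.dist_eq]; exact hmod t' t) hlim
    classical
    have heq : tauTildeOR ω M' q e = fun t => if t ∈ M' then
        min (⨅ j, (e j + ω (dist t (q j)))) (ω (Metric.infDist t (frontier M'))) else 0 := by
      funext t
      by_cases ht : t ∈ M' <;> simp [tauTildeOR, ht]
    rw [heq]
    refine continuous_if (fun t ht => ?_) hc.continuousOn continuousOn_const
    have ht' : t ∈ frontier M' := ht
    rw [Metric.infDist_zero_of_mem ht', h0]
    exact min_eq_right (Real.iInf_nonneg fun j => add_nonneg (he j) (hnn _ dist_nonneg))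
  · rw [tauTildeOR_of_mem ht, tauTildeOR_of_mem ht']
    exact hmod t t'

lemma neg_mem_HtildeOR {f : M → ℝ} (hf : f ∈ HtildeOR ω M') : -f ∈ HtildeOR ω M' := by
  refine ⟨hf.1.neg, fun t ht => by simp [hf.2.1 t ht], fun t ht t' ht' => ?_⟩
  have := hf.2.2 t' ht' t ht
  rw [dist_comm] at this
  simpa [neg_add_eq_sub] using this

lemma exists_bound_of_mem_HtildeOR {f : M → ℝ} (hM : IsCompact M') (hf : f ∈ HtildeOR ω M') :
    ∃ C, ∀ t, ‖f t‖ ≤ C :=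
  hf.1.bounded_above_of_compact_support <| HasCompactSupport.of_support_subset_isCompact hM
    fun t ht => by
      by_contra h
      exact ht (hf.2.1 t h)

/-- A function of the class vanishes on the frontier, hence is controlled by the distance to it.
Noncompactness and connectedness of the ambient space make the frontier nonempty; the distance
to an empty set would be the junk value `0`. -/
lemma abs_le_modulus_infDist [PreconnectedSpace M] [NoncompactSpace M] {f : M → ℝ}
    (hM : IsCompact M') (hf : f ∈ HtildeOR ω M') {t : M} (ht : t ∈ M') :
    |f t| ≤ ω (Metric.infDist t (frontier M')) := by
  have hne : (frontier M').Nonempty := nonempty_frontier_iff.2 ⟨⟨t, ht⟩, hM.ne_univ⟩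
  have hfc : IsCompact (frontier M') :=
    hM.of_isClosed_subset isClosed_frontier hM.isClosed.frontier_subset
  obtain ⟨y, hy, hyd⟩ := hfc.exists_infDist_eq_dist hne t
  have hfy : f y = 0 := by
    have hcl : closure M'ᶜ ⊆ {x | f x = 0} :=
      closure_minimal (fun x hx => hf.2.1 x hx) (isClosed_eq hf.1 continuous_const)
    rw [frontier_eq_closure_inter_closure] at hy
    exact hcl hy.2
  have := hf.2.2 t ht y (hM.isClosed.frontier_subset hy)
  rwa [hfy, sub_zero, ← hyd] at this

/-- Two functions of the class compatible with the same data differ by at most `2 τ̃`. -/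
lemma abs_sub_le_two_tauTildeOR [PreconnectedSpace M] [NoncompactSpace M] (hn : 0 < n)
    {f f' : M → ℝ} (hM : IsCompact M') (hq : ∀ j, q j ∈ M') (hf : f ∈ HtildeOR ω M')
    (hf' : f' ∈ HtildeOR ω M') {z : Fin n → ℝ} (hz : ∀ j, |z j - f (q j)| ≤ e j)
    (hz' : ∀ j, |z j - f' (q j)| ≤ e j) (t : M) :
    f t - f' t ≤ 2 * tauTildeOR ω M' q e t := by
  have : Nonempty (Fin n) := ⟨⟨0, hn⟩⟩
  by_cases ht : t ∈ M'
  · rw [tauTildeOR_of_mem ht]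
    have h1 : (f t - f' t) / 2 ≤ ⨅ j, (e j + ω (dist t (q j))) := by
      refine le_ciInf fun j => ?_
      have a1 := abs_le.1 (hz j)
      have a2 := abs_le.1 (hz' j)
      have a3 := abs_le.1 (hf.2.2 t ht (q j) (hq j))
      have a4 := abs_le.1 (hf'.2.2 t ht (q j) (hq j))
      linarith [a1.1, a2.2, a3.2, a4.1]
    have h2 : (f t - f' t) / 2 ≤ ω (Metric.infDist t (frontier M')) := by
      have a1 := abs_le.1 (abs_le_modulus_infDist hM hf ht)
      have a2 := abs_le.1 (abs_le_modulus_infDist hM hf' ht)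
      linarith [a1.2, a2.1]
    linarith [le_min h1 h2]
  · simp [tauTildeOR_of_notMem ht, hf.2.1 t ht, hf'.2.1 t ht]

end Extremal

/-! ### Integrability of the heat kernel -/

/-- The heat kernel on `ℝ^d`; at `r = 0` it takes the value `0` when `0 < d`. -/
noncomputable def heatKer (d : ℕ) (r : ℝ) (u v : EuclideanSpace ℝ (Fin d)) : ℝ :=
  (4 * Real.pi * r) ^ (-(d : ℝ) / 2) * Real.exp (-(dist u v) ^ 2 / (4 * r))

lemma heatKer_nonneg {d : ℕ} {r : ℝ} (hr : 0 ≤ r) (u v : EuclideanSpace ℝ (Fin d)) :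
    0 ≤ heatKer d r u v := by
  unfold heatKer
  have := Real.pi_pos
  positivity

lemma heatKer_eq {d : ℕ} (r : ℝ) (u v : EuclideanSpace ℝ (Fin d)) : heatKer d r u v =
    (4 * Real.pi * r) ^ (-(d : ℝ) / 2) * Real.exp (-(1 / (4 * r)) * ‖v - u‖ ^ 2) := by
  rw [heatKer, dist_comm, dist_eq_norm]
  congr 2
  ring

lemma integral_heatKer {d : ℕ} {r : ℝ} (hr : 0 < r) (u : EuclideanSpace ℝ (Fin d)) :
    ∫ v, heatKer d r u v = 1 := by
  simp only [heatKer_eq]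
  rw [MeasureTheory.integral_const_mul,
    integral_sub_right_eq_self (fun v : EuclideanSpace ℝ (Fin d) =>
      Real.exp (-(1 / (4 * r)) * ‖v‖ ^ 2)) u,
    GaussianFourier.integral_rexp_neg_mul_sq_norm (by positivity)]
  have hpos : 0 < 4 * Real.pi * r := by have := Real.pi_pos; positivity
  have h4 : Real.pi / (1 / (4 * r)) = 4 * Real.pi * r := by field_simp
  rw [h4, finrank_euclideanSpace_fin, ← Real.rpow_add hpos]
  simp [neg_div]

lemma integrable_heatKer {d : ℕ} {r : ℝ} (hr : 0 < r) (u : EuclideanSpace ℝ (Fin d)) :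
    Integrable (heatKer d r u) :=
  Integrable.of_integral_ne_zero (by rw [integral_heatKer hr]; exact one_ne_zero)

/-- Integrability of the space-time heat kernel: every slice other than the null one `s = t₀` has
mass one, and the time interval is bounded. -/
lemma integrable_heatKer_prod {d : ℕ} (u₀ : EuclideanSpace ℝ (Fin d)) (t₀ : ℝ) :
    Integrable (fun p : ℝ × EuclideanSpace ℝ (Fin d) => heatKer d (t₀ - p.1) u₀ p.2)
      ((volume.restrict (Set.Ioc 0 t₀)).prod volume) := by
  have hae : ∀ᵐ s ∂(volume.restrict (Set.Ioc (0 : ℝ) t₀)), 0 < t₀ - s := by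
    rw [← Measure.restrict_congr_set Ioo_ae_eq_Ioc]
    filter_upwards [ae_restrict_mem measurableSet_Ioo] with s hs
    linarith [hs.2]
  have hmeas : Measurable fun p : ℝ × EuclideanSpace ℝ (Fin d) =>
      heatKer d (t₀ - p.1) u₀ p.2 := by
    unfold heatKer
    fun_prop
  rw [integrable_prod_iff hmeas.aestronglyMeasurable]
  refine ⟨hae.mono fun s hs => integrable_heatKer hs u₀, ?_⟩
  refine (integrable_const (1 : ℝ)).congr (hae.mono fun s hs => ?_)
  rw [← integral_heatKer hs u₀]
  exact integral_congr_ae (Filter.Eventually.of_forall fun v =>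
    (Real.norm_of_nonneg (heatKer_nonneg hs.le u₀ v)).symm)

/-! ### Positive functionals given by an integrable kernel -/

section Functional

variable {X Y : Type*} [MeasurableSpace X] [MetricSpace Y] [MeasurableSpace Y] [BorelSpace Y]
  {ω : ℝ → ℝ} {M' : Set Y} {κ : Measure X} {K : X → ℝ} {φ : X → Y}

lemma integrable_kernel_mul (hK : Integrable K κ) (hφ : Measurable φ) (hM : IsCompact M')
    {f : Y → ℝ} (hf : f ∈ HtildeOR ω M') : Integrable (fun x => K x * f (φ x)) κ := by
  obtain ⟨C, hC⟩ := exists_bound_of_mem_HtildeOR hM hf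
  exact hK.mul_bdd (hf.1.measurable.comp hφ).aestronglyMeasurable
    (Filter.Eventually.of_forall fun x => hC (φ x))

lemma integral_kernel_sub_le {f f' τ : Y → ℝ} (hK : Integrable K κ) (hK0 : 0 ≤ᵐ[κ] K)
    (hφ : Measurable φ) (hM : IsCompact M')
    (hf : f ∈ HtildeOR ω M') (hf' : f' ∈ HtildeOR ω M') (hτ : τ ∈ HtildeOR ω M')
    (h : ∀ y, f y - f' y ≤ 2 * τ y) :
    (∫ x, K x * f (φ x) ∂κ) - ∫ x, K x * f' (φ x) ∂κ ≤ 2 * ∫ x, K x * τ (φ x) ∂κ := by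
  have i1 := integrable_kernel_mul hK hφ hM hf
  have i2 := integrable_kernel_mul hK hφ hM hf'
  have i3 := integrable_kernel_mul hK hφ hM hτ
  rw [← integral_sub i1 i2, ← MeasureTheory.integral_const_mul]
  refine integral_mono_ae (i1.sub i2) (i3.const_mul 2) (hK0.mono fun x hx => ?_)
  have := mul_le_mul_of_nonneg_left (h (φ x)) hx
  dsimp only at this ⊢
  linarith

end Functional

/-! ### The error of optimal recovery for the heat equation -/

/-- Error of optimal recovery of the solution to the Cauchy problem for the heat equation
at a single space-time point `(u₀, t₀)`. -/
theorem optimal_recovery_heat_single_point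
    (d : ℕ) (hd : 0 < d) (u₀ : EuclideanSpace ℝ (Fin d)) (t₀ : ℝ) (ht₀ : 0 < t₀)
    (ω₁ ω₂ : ℝ → ℝ)
    (hω₁0 : ω₁ 0 = 0) (hω₁_cont : ContinuousOn ω₁ (Set.Ici 0))
    (hω₁_mono : MonotoneOn ω₁ (Set.Ici 0))
    (hω₁_subadd : ∀ s t : ℝ, 0 ≤ s → 0 ≤ t → ω₁ (s + t) ≤ ω₁ s + ω₁ t)
    (hω₁_nonneg : ∀ s : ℝ, 0 ≤ s → 0 ≤ ω₁ s)
    (hω₂0 : ω₂ 0 = 0) (hω₂_cont : ContinuousOn ω₂ (Set.Ici 0))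
    (hω₂_mono : MonotoneOn ω₂ (Set.Ici 0))
    (hω₂_subadd : ∀ s t : ℝ, 0 ≤ s → 0 ≤ t → ω₂ (s + t) ≤ ω₂ s + ω₂ t)
    (hω₂_nonneg : ∀ s : ℝ, 0 ≤ s → 0 ≤ ω₂ s)
    (M₁ : Set (EuclideanSpace ℝ (Fin d) × ℝ)) (hM₁ : IsCompact M₁)
    (hM₁D : ∀ p ∈ M₁, 0 < p.2)
    (M₂ : Set (EuclideanSpace ℝ (Fin d))) (hM₂ : IsCompact M₂)
    {n₁ n₂ : ℕ} (hn₁ : 0 < n₁) (hn₂ : 0 < n₂)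
    (q₁ : Fin n₁ → EuclideanSpace ℝ (Fin d) × ℝ) (hq₁ : ∀ j, q₁ j ∈ M₁)
    (q₂ : Fin n₂ → EuclideanSpace ℝ (Fin d)) (hq₂ : ∀ j, q₂ j ∈ M₂)
    (e₁ : Fin n₁ → ℝ) (he₁ : ∀ j, 0 ≤ e₁ j)
    (e₂ : Fin n₂ → ℝ) (he₂ : ∀ j, 0 ≤ e₂ j) :
    let heatK : ℝ → EuclideanSpace ℝ (Fin d) → EuclideanSpace ℝ (Fin d) → ℝ :=
      fun r u v => (4 * Real.pi * r) ^ (-(d : ℝ) / 2) * Real.exp (-(dist u v) ^ 2 / (4 * r))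
    let A₁ : (EuclideanSpace ℝ (Fin d) × ℝ → ℝ) → EuclideanSpace ℝ (Fin d) → ℝ → ℝ :=
      fun f u t => ∫ s in (0 : ℝ)..t, ∫ v, heatK (t - s) u v * f (v, s)
    let A₂ : (EuclideanSpace ℝ (Fin d) → ℝ) → EuclideanSpace ℝ (Fin d) → ℝ → ℝ :=
      fun g u t => ∫ v, heatK t u v * g v
    let W₁ := HtildeOR ω₁ M₁
    let W₂ := HtildeOR ω₂ M₂
    let τ₁ := tauTildeOR ω₁ M₁ q₁ e₁
    let τ₂ := tauTildeOR ω₂ M₂ q₂ e₂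
    (⨅ Φ : (Fin n₁ → ℝ) × (Fin n₂ → ℝ) → ℝ,
        ⨆ f ∈ W₁, ⨆ g ∈ W₂, ⨆ z : (Fin n₁ → ℝ) × (Fin n₂ → ℝ),
          ⨆ (_ : (∀ j, |z.1 j - f (q₁ j)| ≤ e₁ j) ∧ ∀ j, |z.2 j - g (q₂ j)| ≤ e₂ j),
            ENNReal.ofReal |(A₁ f u₀ t₀ + A₂ g u₀ t₀) - Φ z|) =
      (∫⁻ s in Set.Ioc (0 : ℝ) t₀, ∫⁻ v, ENNReal.ofReal (heatK (t₀ - s) u₀ v * τ₁ (v, s))) +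
        ∫⁻ v, ENNReal.ofReal (heatK t₀ u₀ v * τ₂ v) := by
  intro heatK A₁ A₂ W₁ W₂ τ₁ τ₂
  have : Nonempty (Fin d) := ⟨⟨0, hd⟩⟩
  have : NoncompactSpace (EuclideanSpace ℝ (Fin d)) :=
    NormedSpace.noncompactSpace ℝ (EuclideanSpace ℝ (Fin d))
  have : NoncompactSpace (EuclideanSpace ℝ (Fin d) × ℝ) :=
    NormedSpace.noncompactSpace ℝ (EuclideanSpace ℝ (Fin d) × ℝ)
  let κ : Measure (ℝ × EuclideanSpace ℝ (Fin d)) :=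
    (volume.restrict (Set.Ioc 0 t₀)).prod volume
  let K : ℝ × EuclideanSpace ℝ (Fin d) → ℝ := fun p => heatKer d (t₀ - p.1) u₀ p.2
  have hK : Integrable K κ := integrable_heatKer_prod u₀ t₀
  have hK0 : 0 ≤ᵐ[κ] K := by
    have h : ∀ᵐ s ∂(volume.restrict (Set.Ioc (0 : ℝ) t₀)), s ∈ Set.Ioc (0 : ℝ) t₀ :=
      ae_restrict_mem measurableSet_Ioc
    filter_upwards [Measure.quasiMeasurePreserving_fst.ae h] with p hp
    exact heatKer_nonneg (sub_nonneg.2 hp.2) u₀ p.2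
  have hG : Integrable (heatKer d t₀ u₀) volume := integrable_heatKer ht₀ u₀
  have hG0 : 0 ≤ᵐ[volume] heatKer d t₀ u₀ :=
    Filter.Eventually.of_forall fun v => heatKer_nonneg ht₀.le u₀ v
  have hsw : Measurable (Prod.swap : ℝ × EuclideanSpace ℝ (Fin d) → _) := measurable_swap
  have hτ₁ : τ₁ ∈ W₁ := tauTildeOR_mem hn₁ hω₁0 hω₁_cont hω₁_mono hω₁_subadd hω₁_nonneg
    he₁
  have hτ₂ : τ₂ ∈ W₂ := tauTildeOR_mem hn₂ hω₂0 hω₂_cont hω₂_mono hω₂_subadd hω₂_nonneg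
    he₂
  have hτ₁0 : ∀ p, 0 ≤ τ₁ p := tauTildeOR_nonneg hω₁_nonneg he₁
  have hτ₂0 : ∀ p, 0 ≤ τ₂ p := tauTildeOR_nonneg hω₂_nonneg he₂
  have hA₁ : ∀ f ∈ W₁, A₁ f u₀ t₀ = ∫ p, K p * f p.swap ∂κ := by
    intro f hf
    rw [integral_prod _ (integrable_kernel_mul hK hsw hM₁ hf)]
    exact intervalIntegral.integral_of_le ht₀.le
  have hA₂ : ∀ g, A₂ g u₀ t₀ = ∫ v, heatKer d t₀ u₀ v * g (id v) := fun g => rfl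
  have hR₁ : (∫⁻ s in Set.Ioc (0 : ℝ) t₀, ∫⁻ v,
      ENNReal.ofReal (heatK (t₀ - s) u₀ v * τ₁ (v, s))) = ENNReal.ofReal (A₁ τ₁ u₀ t₀) := by
    have hi := integrable_kernel_mul hK hsw hM₁ hτ₁
    rw [hA₁ τ₁ hτ₁, ofReal_integral_eq_lintegral_ofReal hi
      (hK0.mono fun p hp => mul_nonneg hp (hτ₁0 _)),
      lintegral_prod _ hi.aestronglyMeasurable.aemeasurable.ennreal_ofReal]
    rfl
  have hR₂ : (∫⁻ v, ENNReal.ofReal (heatK t₀ u₀ v * τ₂ v)) = ENNReal.ofReal (A₂ τ₂ u₀ t₀) := by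
    have hi := integrable_kernel_mul hG measurable_id hM₂ hτ₂
    rw [hA₂ τ₂, ofReal_integral_eq_lintegral_ofReal hi
      (hG0.mono fun p hp => mul_nonneg hp (hτ₂0 _))]
    rfl
  have hP₁ : 0 ≤ A₁ τ₁ u₀ t₀ := by
    rw [hA₁ τ₁ hτ₁]
    exact integral_nonneg_of_ae (hK0.mono fun p hp => mul_nonneg hp (hτ₁0 _))
  have hP₂ : 0 ≤ A₂ τ₂ u₀ t₀ := by
    rw [hA₂ τ₂]
    exact integral_nonneg_of_ae (hG0.mono fun p hp => mul_nonneg hp (hτ₂0 _))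
  have hq₁τ : ∀ j, |τ₁ (q₁ j)| ≤ e₁ j := fun j => by
    rw [abs_of_nonneg (hτ₁0 _)]
    exact tauTildeOR_le hω₁0 hq₁ j
  have hq₂τ : ∀ j, |τ₂ (q₂ j)| ≤ e₂ j := fun j => by
    rw [abs_of_nonneg (hτ₂0 _)]
    exact tauTildeOR_le hω₂0 hq₂ j
  rw [hR₁, hR₂, ← ENNReal.ofReal_add hP₁ hP₂]
  refine iInf_iSup_error_eq W₁ W₂ (fun f g => A₁ f u₀ t₀ + A₂ g u₀ t₀)
    (fun f g (z : (Fin n₁ → ℝ) × (Fin n₂ → ℝ)) =>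
      (∀ j, |z.1 j - f (q₁ j)| ≤ e₁ j) ∧ ∀ j, |z.2 j - g (q₂ j)| ≤ e₂ j) _ ?_ 0
    τ₁ (-τ₁) hτ₁ (neg_mem_HtildeOR hτ₁) τ₂ (-τ₂) hτ₂ (neg_mem_HtildeOR hτ₂) ?_ ?_ rfl ?_
  · intro z f hf g hg hp f' hf' g' hg' hp'
    have h₁ := integral_kernel_sub_le hK hK0 hsw hM₁ hf hf' hτ₁
      (abs_sub_le_two_tauTildeOR hn₁ hM₁ hq₁ hf hf' hp.1 hp'.1)
    have h₂ := integral_kernel_sub_le hG hG0 measurable_id hM₂ hg hg' hτ₂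
      (abs_sub_le_two_tauTildeOR hn₂ hM₂ hq₂ hg hg' hp.2 hp'.2)
    rw [← hA₁ f hf, ← hA₁ f' hf', ← hA₁ τ₁ hτ₁] at h₁
    rw [← hA₂ g, ← hA₂ g', ← hA₂ τ₂] at h₂
    linarith
  · exact ⟨fun j => by simpa using hq₁τ j, fun j => by simpa using hq₂τ j⟩
  · exact ⟨fun j => by simpa using hq₁τ j, fun j => by simpa using hq₂τ j⟩
  · have h₁ : A₁ (-τ₁) u₀ t₀ = -A₁ τ₁ u₀ t₀ := by
      rw [hA₁ _ (neg_mem_HtildeOR hτ₁), hA₁ τ₁ hτ₁, ← MeasureTheory.integral_neg]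
      simp
    have h₂ : A₂ (-τ₂) u₀ t₀ = -A₂ τ₂ u₀ t₀ := by
      rw [hA₂, hA₂, ← MeasureTheory.integral_neg]
      simp
    rw [h₁, h₂]
    ring
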